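/- arXiv:2512.09712 — 8 statements merged into one kernel-verified Lean document; each statement's English description precedes it below -/
import Mathlib

section
/- Let f : ℝⁿ → ℝ be a twice continuously differentiable convex function with global minimizer x*, and let x : [0,∞) → ℝⁿ be a twice differentiable solution of the damped-Newton flow ∇²f(x(t))·ẋ(t) + ∇f(x(t)) = 0 for all t ≥ 0. Then f(x(t)) − f(x*) = O(e^{−t}) as t → ∞; that is, there exist constants T, C > 0 such that f(x(t)) − f(x*) ≤ C·e^{−t} for all t ≥ T. -/
open scoped RealInnerProductSpace

/-!
The flow says that `p t = ∇f (x t)` satisfies `p' = -p`, so `p t = e^{-t} p 0`: the gradient only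
shrinks, in a fixed direction. Monotonicity of the subdifferential then forces
`⟪p 0, x t - x 0⟫ ≤ 0`, and the subgradient inequality at `x t` gives
`f (x t) - f y ≤ e^{-t} ⟪p 0, x t - y⟫ ≤ e^{-t} ⟪p 0, x 0 - y⟫` for every `y`.
-/

open Set

theorem eq_exp_smul_of_hasDerivWithinAt {E : Type*} [NormedAddCommGroup E] [NormedSpace ℝ E]
    {g g' : ℝ → E} {a c t : ℝ} (hg : ∀ s, a ≤ s → HasDerivWithinAt g (g' s) (Ici a) s)
    (hode : ∀ s, a ≤ s → g' s = c • g s) (ht : a ≤ t) :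
    g t = Real.exp (c * (t - a)) • g a := by
  let h (s : ℝ) : E := Real.exp (c * (a - s)) • g s
  have hderiv (s : ℝ) (hs : a ≤ s) : HasDerivWithinAt h 0 (Ici a) s := by
    have hexp := (((hasDerivAt_id' s).const_sub a).const_mul c).exp.hasDerivWithinAt (s := Ici a)
    refine (hexp.smul (hg s hs)).congr_deriv ?_
    rw [hode s hs]
    module
  have hconst : h t = h a := constant_of_has_deriv_right_zero
    (fun s hs => (hderiv s hs.1).continuousWithinAt.mono Icc_subset_Ici_self)
    (fun s hs => (hderiv s hs.1).mono (Ici_subset_Ici.2 hs.1)) t ⟨ht, le_rfl⟩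
  calc
    g t = Real.exp (c * (t - a)) • h t := by
      rw [smul_smul, ← Real.exp_add, ← mul_add, sub_add_sub_cancel, sub_self, mul_zero,
        Real.exp_zero, one_smul]
    _ = Real.exp (c * (t - a)) • g a := by
      rw [hconst]
      simp [h]

section Subgradient

variable {E : Type*} [AddCommGroup E] [Module ℝ E] [TopologicalSpace E]

/-- `p` is a subgradient of `f` at `x`, i.e. `p ∈ ∂f(x)`. Subgradients are continuous linear
functionals, so that no inner product is needed. -/
def IsSubgradientAt (f : E → ℝ) (p : StrongDual ℝ E) (x : E) : Prop :=
  ∀ y, f x + p (y - x) ≤ f y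

namespace IsSubgradientAt

variable {f : E → ℝ} {p q : StrongDual ℝ E} {x y : E} {c : ℝ}

theorem sub_le (hp : IsSubgradientAt f p x) (y : E) : f x - f y ≤ p (x - y) := by
  have h := hp y
  rw [← neg_sub x y, map_neg] at h
  linarith

theorem sub_apply_sub_nonneg (hp : IsSubgradientAt f p x) (hq : IsSubgradientAt f q y) :
    0 ≤ (p - q) (x - y) := by
  rw [sub_apply]
  linarith [hp.sub_le y, hq x]

theorem apply_le_of_smul (hp : IsSubgradientAt f p x) (hq : IsSubgradientAt f (c • p) y)
    (hc : c < 1) : p y ≤ p x := by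
  have hmono : 0 ≤ (1 - c) * (p x - p y) := by
    simpa [sub_mul] using hp.sub_apply_sub_nonneg hq
  exact sub_nonneg.1 (nonneg_of_mul_nonneg_right hmono (sub_pos.2 hc))

theorem sub_le_mul_of_smul (hp : IsSubgradientAt f p x) (hq : IsSubgradientAt f (c • p) y)
    (hc₀ : 0 ≤ c) (hc₁ : c < 1) (z : E) : f y - f z ≤ c * p (x - z) := by
  calc
    f y - f z ≤ c * p (y - z) := hq.sub_le z
    _ ≤ c * p (x - z) := by
      rw [map_sub, map_sub]
      gcongr
      exact hp.apply_le_of_smul hq hc₁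

end IsSubgradientAt

end Subgradient

theorem damped_newton_flow_exponential_rate_general {E : Type*} [NormedAddCommGroup E]
    [NormedSpace ℝ E] {f : E → ℝ} {x : ℝ → E} {p p' : ℝ → StrongDual ℝ E}
    (hsub : ∀ t, 0 ≤ t → IsSubgradientAt f (p t) (x t))
    (hp : ∀ t, 0 ≤ t → HasDerivWithinAt p (p' t) (Ici 0) t)
    (hode : ∀ t, 0 ≤ t → p' t + p t = 0) {t : ℝ} (ht : 0 ≤ t) (y : E) :
    f (x t) - f y ≤ p 0 (x 0 - y) * Real.exp (-t) := by
  have hexp : p t = Real.exp (-t) • p 0 := by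
    simpa using eq_exp_smul_of_hasDerivWithinAt (c := -1) hp
      (fun s hs => by simpa using eq_neg_of_add_eq_zero_left (hode s hs)) ht
  have h₀ : IsSubgradientAt f (p 0) (x 0) := hsub 0 le_rfl
  rcases ht.eq_or_lt with rfl | htpos
  · simpa using h₀.sub_le y
  · rw [mul_comm]
    exact h₀.sub_le_mul_of_smul (hexp ▸ hsub t ht) (Real.exp_pos _).le
      (Real.exp_lt_one_iff.2 (neg_neg_of_pos htpos)) y

/-- For a twice continuously differentiable convex function `f` on `ℝⁿ`
with global minimizer `x*`, any twice differentiable solution of the damped-Newton flow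
`∇²f(x(t))·ẋ(t) + ∇f(x(t)) = 0` (for `t ≥ 0`) satisfies
`f(x(t)) − f(x*) = O(e^{−t})` as `t → ∞`. -/
theorem damped_newton_flow_exponential_rate {n : ℕ}
    (f : EuclideanSpace ℝ (Fin n) → ℝ)
    (xstar : EuclideanSpace ℝ (Fin n))
    (hf : ContDiff ℝ 2 f)
    (hmin : ∀ y, f xstar ≤ f y)
    (hconv : ∀ y z : EuclideanSpace ℝ (Fin n),
      f z ≥ f y + ⟪gradient f y, z - y⟫)
    (x v a H : ℝ → EuclideanSpace ℝ (Fin n))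
    (hx : ∀ t : ℝ, 0 ≤ t → HasDerivAt x (v t) t)
    (hv : ∀ t : ℝ, 0 ≤ t → HasDerivAt v (a t) t)
    (hH : ∀ t : ℝ, 0 ≤ t → HasDerivAt (fun s => gradient f (x s)) (H t) t)
    (hode : ∀ t : ℝ, 0 ≤ t → H t + gradient f (x t) = 0) :
    ∃ T C : ℝ, 0 < T ∧ 0 < C ∧
      ∀ t : ℝ, T ≤ t → f (x t) - f xstar ≤ C * Real.exp (-t) := by
  have hbound {t : ℝ} (ht : 0 ≤ t) := damped_newton_flow_exponential_rate_general
    (p := fun s => innerSL ℝ (gradient f (x s))) (fun s _ => hconv (x s))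
    (fun s hs => ((innerSL ℝ).hasFDerivAt.comp_hasDerivAt s (hH s hs)).hasDerivWithinAt)
    (fun s hs => by rw [← map_add, hode s hs, map_zero]) ht xstar
  refine ⟨1, max ⟪gradient f (x 0), x 0 - xstar⟫ 1, one_pos, by positivity, fun t ht => ?_⟩
  exact (hbound (zero_le_one.trans ht)).trans (by gcongr; exact le_max_left _ _)
end

section
/- Let 0 < μ < L, and let f : ℝⁿ → ℝ be twice continuously differentiable, μ-strongly convex and L-smooth, with global minimizer x*. Let x : [0,∞) → ℝⁿ be a twice differentiable solution of ẋ(t) − (1/L)·∇²f(x(t))·ẋ(t) + ∇f(x(t)) = 0 for all t ≥ 0. Then f(x(t)) − f(x*) = O( e^{−(μ/(1−μ/L))·t} ) as t → ∞. -/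
open scoped RealInnerProductSpace

/-!
The squared gradient norm decays along the flow. Strong convexity and smoothness together confine
the increments of `∇f` by `⟪Δ∇f - μ Δx, L Δx - Δ∇f⟫ ≥ 0`, and this passes to the time derivatives
`v` of `x` and `H` of `∇f(x)`. The flow equation says that `L v - H = -L ∇f(x)`, so the inequality
becomes `(1 - μ/L) ⟪∇f(x), H⟫ ≤ -μ ‖∇f(x)‖²`, and Grönwall's inequality makes `‖∇f(x)‖²` decay at
rate `2μ / (1 - μ/L)`. The Polyak–Łojasiewicz inequality transfers this rate to the values of `f`.
-/

section QuadraticBounds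

variable {E : Type*} [NormedAddCommGroup E] [InnerProductSpace ℝ E]
  {f : E → ℝ} {g : E → E} {μ L : ℝ}

lemma le_add_inner_add_sq_norm_of_gradient_lipschitz [CompleteSpace E]
    (hf : ∀ y, HasGradientAt f (g y) y) (hg : ∀ y z, ‖g y - g z‖ ≤ L * ‖y - z‖) (y z : E) :
    f z ≤ f y + ⟪g y, z - y⟫ + L / 2 * ‖z - y‖ ^ 2 := by
  set d := z - y with hd
  have hline (s : ℝ) : HasDerivAt (fun s : ℝ => y + s • d) d s := by
    simpa using ((hasDerivAt_id s).smul_const d).const_add y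
  have hleft (s : ℝ) : HasDerivAt (fun s : ℝ => f (y + s • d)) ⟪g (y + s • d), d⟫ s :=
    ((hf _).hasFDerivAt.comp_hasDerivAt s (hline s)).congr_deriv (by simp)
  have hright (s : ℝ) : HasDerivAt (fun s : ℝ => f y + s * ⟪g y, d⟫ + L / 2 * ‖d‖ ^ 2 * s ^ 2)
      (⟪g y, d⟫ + L * ‖d‖ ^ 2 * s) s := by
    refine ((((hasDerivAt_id s).mul_const _).const_add _).add
      (((hasDerivAt_id s).pow 2).const_mul _)).congr_deriv ?_
    simp only [id, Nat.cast_ofNat]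
    ring
  have hderiv_le (s : ℝ) (hs : 0 ≤ s) :
      ⟪g (y + s • d), d⟫ ≤ ⟪g y, d⟫ + L * ‖d‖ ^ 2 * s := by
    rw [← sub_le_iff_le_add', ← inner_sub_left]
    calc ⟪g (y + s • d) - g y, d⟫ ≤ ‖g (y + s • d) - g y‖ * ‖d‖ := real_inner_le_norm _ _
      _ ≤ L * ‖y + s • d - y‖ * ‖d‖ := by gcongr; exact hg _ _
      _ = L * ‖d‖ ^ 2 * s := by
        rw [add_sub_cancel_left, norm_smul, Real.norm_of_nonneg hs]; ring
  have h := image_le_of_deriv_right_le_deriv_boundary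
    (fun s _ => (hleft s).continuousAt.continuousWithinAt)
    (fun s _ => (hleft s).hasDerivWithinAt) (by simp)
    (fun s _ => (hright s).continuousAt.continuousWithinAt)
    (fun s _ => (hright s).hasDerivWithinAt) (fun s hs => hderiv_le s hs.1)
    (Set.right_mem_Icc.2 (zero_le_one (α := ℝ)))
  simpa [hd] using h

/-- The two bounds are compared at the gradient step of length `1 / (L - μ)` from `z` for the
function `f - ⟪g y, ·⟫ - μ / 2 * ‖· - y‖ ^ 2`, which is minimal at `y`. -/
lemma add_inner_add_sq_norm_add_sq_norm_sub_smul_le (hμL : μ < L)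
    (hlower : ∀ y z, f y + ⟪g y, z - y⟫ + μ / 2 * ‖z - y‖ ^ 2 ≤ f z)
    (hupper : ∀ y z, f z ≤ f y + ⟪g y, z - y⟫ + L / 2 * ‖z - y‖ ^ 2) (y z : E) :
    f y + ⟪g y, z - y⟫ + μ / 2 * ‖z - y‖ ^ 2
      + ‖g z - g y - μ • (z - y)‖ ^ 2 / (2 * (L - μ)) ≤ f z := by
  set r := g z - g y - μ • (z - y) with hr
  set s := (L - μ)⁻¹ with hs
  have hs_mul : s * (L - μ) = 1 := inv_mul_cancel₀ (sub_pos.2 hμL).ne'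
  have hlow := hlower y (z - s • r)
  have hup := hupper z (z - s • r)
  rw [sub_right_comm, inner_sub_right, norm_sub_sq_real, real_inner_smul_right,
    real_inner_smul_right, norm_smul, mul_pow, Real.norm_eq_abs, sq_abs] at hlow
  rw [sub_sub_cancel_left, inner_neg_right, norm_neg, real_inner_smul_right, norm_smul, mul_pow,
    Real.norm_eq_abs, sq_abs] at hup
  have hinner : ⟪g z, r⟫ - ⟪g y, r⟫ - μ * ⟪z - y, r⟫ = ‖r‖ ^ 2 := by
    rw [← real_inner_smul_left, ← inner_sub_left, ← inner_sub_left, ← hr,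
      real_inner_self_eq_norm_sq]
  have hsq : s ^ 2 * (L - μ) = s := by rw [sq, mul_assoc, hs_mul, mul_one]
  have hdiv : ‖r‖ ^ 2 / (2 * (L - μ)) = s / 2 * ‖r‖ ^ 2 := by rw [hs]; field_simp
  linear_combination hlow + hup + hdiv - s * hinner + ‖r‖ ^ 2 / 2 * hsq

/-- For `μ = 0` this is the cocoercivity of the gradient of a convex function. -/
lemma inner_sub_smul_smul_sub_nonneg (hμL : μ < L)
    (hlower : ∀ y z, f y + ⟪g y, z - y⟫ + μ / 2 * ‖z - y‖ ^ 2 ≤ f z)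
    (hupper : ∀ y z, f z ≤ f y + ⟪g y, z - y⟫ + L / 2 * ‖z - y‖ ^ 2) (y z : E) :
    0 ≤ ⟪g z - g y - μ • (z - y), L • (z - y) - (g z - g y)⟫ := by
  have hyz := add_inner_add_sq_norm_add_sq_norm_sub_smul_le hμL hlower hupper y z
  have hzy := add_inner_add_sq_norm_add_sq_norm_sub_smul_le hμL hlower hupper z y
  set d := z - y with hd
  set r := g z - g y - μ • d with hr
  have hr_neg : g y - g z - μ • (y - z) = -r := by rw [hr, hd]; module
  rw [hr_neg, norm_neg, ← neg_sub z y, ← hd, inner_neg_right, norm_neg] at hzy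
  have hrd : ⟪r, d⟫ = ⟪g z, d⟫ - ⟪g y, d⟫ - μ * ‖d‖ ^ 2 := by
    rw [hr, inner_sub_left, inner_sub_left, real_inner_smul_left, real_inner_self_eq_norm_sq]
  have hsum : ‖r‖ ^ 2 / (L - μ) ≤ ⟪r, d⟫ := by
    rw [hrd, ← mul_div_mul_left _ _ (two_ne_zero (α := ℝ)), mul_div_assoc]
    linear_combination hyz + hzy
  have hsplit : L • d - (g z - g y) = (L - μ) • d - r := by rw [hr]; module
  rw [hsplit, inner_sub_right, real_inner_smul_right, real_inner_self_eq_norm_sq]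
  exact sub_nonneg.2 ((div_le_iff₀' (sub_pos.2 hμL)).1 hsum)

lemma inner_deriv_sub_smul_smul_sub_deriv_nonneg (hμL : μ < L)
    (hlower : ∀ y z, f y + ⟪g y, z - y⟫ + μ / 2 * ‖z - y‖ ^ 2 ≤ f z)
    (hupper : ∀ y z, f z ≤ f y + ⟪g y, z - y⟫ + L / 2 * ‖z - y‖ ^ 2)
    {x : ℝ → E} {v H : E} {s : Set ℝ} {t : ℝ} (hs : UniqueDiffWithinAt ℝ s t)
    (hx : HasDerivWithinAt x v s t) (hH : HasDerivWithinAt (fun τ => g (x τ)) H s t) :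
    0 ≤ ⟪H - μ • v, L • v - H⟫ := by
  rw [hasDerivWithinAt_iff_tendsto_slope] at hx hH
  have := accPt_principal_iff_nhdsWithin.1 (uniqueDiffWithinAt_iff_accPt.1 hs)
  refine ge_of_tendsto' ((hH.sub (hx.const_smul μ)).inner ((hx.const_smul L).sub hH)) fun τ => ?_
  have hslope : ⟪slope (fun τ => g (x τ)) t τ - μ • slope x t τ,
      L • slope x t τ - slope (fun τ => g (x τ)) t τ⟫ = ((τ - t)⁻¹) ^ 2 *
        ⟪g (x τ) - g (x t) - μ • (x τ - x t), L • (x τ - x t) - (g (x τ) - g (x t))⟫ := by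
    simp only [slope_def_module, smul_comm _ (τ - t)⁻¹, ← smul_sub, real_inner_smul_left,
      real_inner_smul_right]
    ring
  rw [hslope]
  exact mul_nonneg (sq_nonneg _) (inner_sub_smul_smul_sub_nonneg hμL hlower hupper _ _)

lemma sub_le_sq_norm_gradient_div (hμ : 0 < μ) {y z : E}
    (hlower : f y + ⟪g y, z - y⟫ + μ / 2 * ‖z - y‖ ^ 2 ≤ f z) :
    f y - f z ≤ ‖g y‖ ^ 2 / (2 * μ) := by
  have hsq : 0 ≤ ‖g y + μ • (z - y)‖ ^ 2 := sq_nonneg _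
  rw [norm_add_sq_real, real_inner_smul_right, norm_smul, mul_pow, Real.norm_eq_abs,
    sq_abs] at hsq
  rw [le_div_iff₀ (by positivity)]
  linear_combination hsq + 2 * μ * hlower

end QuadraticBounds

lemma le_mul_exp_of_deriv_le_mul {φ φ' : ℝ → ℝ} {K a : ℝ}
    (hφ : ∀ t, a ≤ t → HasDerivWithinAt φ (φ' t) (Set.Ici a) t)
    (hφ' : ∀ t, a ≤ t → φ' t ≤ K * φ t) {t : ℝ} (ht : a ≤ t) :
    φ t ≤ φ a * Real.exp (K * (t - a)) := by
  rw [← gronwallBound_ε0]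
  refine le_gronwallBound_of_liminf_deriv_right_le (f' := φ')
    (fun s hs => (hφ s hs.1).continuousWithinAt.mono Set.Icc_subset_Ici_self)
    (fun s hs r hr => ?_) le_rfl (fun s hs => by simpa using hφ' s hs.1) t ⟨ht, le_rfl⟩
  exact ((hφ s hs.1).mono (Set.Ici_subset_Ici.2 hs.1)).liminf_right_slope_le hr

section HessianFlow

variable {E : Type*} [NormedAddCommGroup E] [InnerProductSpace ℝ E] {μ L : ℝ}

lemma inner_le_neg_mul_sq_norm_of_flow (hL : 0 < L) (hμL : μ < L) {p v H : E}
    (hinner : 0 ≤ ⟪H - μ • v, L • v - H⟫) (hode : v - (1 / L) • H + p = 0) :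
    ⟪p, H⟫ ≤ -(μ / (1 - μ / L)) * ‖p‖ ^ 2 := by
  have hpos : 0 < 1 - μ / L := sub_pos.2 ((div_lt_one hL).2 hμL)
  have hv : v = (1 / L) • H - p := by rw [← sub_eq_zero, ← hode]; abel
  have hleft : H - μ • v = (1 - μ / L) • H + μ • p := by rw [hv]; module
  have hright : L • v - H = -(L • p) := by
    rw [hv, smul_sub, smul_smul, mul_one_div_cancel hL.ne', one_smul]; abel
  rw [hleft, hright, inner_neg_right, real_inner_smul_right, inner_add_left,
    real_inner_smul_left, real_inner_smul_left, real_inner_self_eq_norm_sq, real_inner_comm,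
    Left.nonneg_neg_iff] at hinner
  rw [← neg_div, div_mul_eq_mul_div, le_div_iff₀ hpos]
  linarith [nonpos_of_mul_nonpos_right hinner hL]

variable {f : E → ℝ}

lemma sq_norm_gradient_le_mul_exp_of_flow {g : E → E} (hL : 0 < L) (hμL : μ < L)
    (hlower : ∀ y z, f y + ⟪g y, z - y⟫ + μ / 2 * ‖z - y‖ ^ 2 ≤ f z)
    (hupper : ∀ y z, f z ≤ f y + ⟪g y, z - y⟫ + L / 2 * ‖z - y‖ ^ 2)
    {x v H : ℝ → E}
    (hx : ∀ t, 0 ≤ t → HasDerivWithinAt x (v t) (Set.Ici 0) t)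
    (hH : ∀ t, 0 ≤ t → HasDerivWithinAt (fun s => g (x s)) (H t) (Set.Ici 0) t)
    (hode : ∀ t, 0 ≤ t → v t - (1 / L) • H t + g (x t) = 0) {t : ℝ} (ht : 0 ≤ t) :
    ‖g (x t)‖ ^ 2 ≤ ‖g (x 0)‖ ^ 2 * Real.exp (-(2 * (μ / (1 - μ / L))) * t) := by
  have hdissip (s : ℝ) (hs : 0 ≤ s) :
      2 * ⟪g (x s), H s⟫ ≤ -(2 * (μ / (1 - μ / L))) * ‖g (x s)‖ ^ 2 := by
    have hinner := inner_deriv_sub_smul_smul_sub_deriv_nonneg hμL hlower hupper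
      (uniqueDiffOn_Ici 0 s hs) (hx s hs) (hH s hs)
    linear_combination 2 * inner_le_neg_mul_sq_norm_of_flow hL hμL hinner (hode s hs)
  simpa using le_mul_exp_of_deriv_le_mul (fun s hs => (hH s hs).norm_sq) hdissip ht

theorem first_order_hessian_flow_rate_general [CompleteSpace E] (hμ : 0 < μ) (hμL : μ < L)
    (hf : Differentiable ℝ f)
    (hsc : ∀ y z, f z ≥ f y + ⟪gradient f y, z - y⟫ + μ / 2 * ‖z - y‖ ^ 2)
    (hsmooth : ∀ y z, ‖gradient f y - gradient f z‖ ≤ L * ‖y - z‖)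
    {x v H : ℝ → E}
    (hx : ∀ t, 0 ≤ t → HasDerivWithinAt x (v t) (Set.Ici 0) t)
    (hH : ∀ t, 0 ≤ t → HasDerivWithinAt (fun s => gradient f (x s)) (H t) (Set.Ici 0) t)
    (hode : ∀ t, 0 ≤ t → v t - (1 / L) • H t + gradient f (x t) = 0)
    (y : E) {t : ℝ} (ht : 0 ≤ t) :
    f (x t) - f y ≤
      ‖gradient f (x 0)‖ ^ 2 / (2 * μ) * Real.exp (-(2 * (μ / (1 - μ / L))) * t) := by
  have hupper := le_add_inner_add_sq_norm_of_gradient_lipschitz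
    (fun y => (hf y).hasGradientAt) hsmooth
  calc f (x t) - f y ≤ ‖gradient f (x t)‖ ^ 2 / (2 * μ) :=
        sub_le_sq_norm_gradient_div hμ (hsc (x t) y)
    _ ≤ ‖gradient f (x 0)‖ ^ 2 * Real.exp (-(2 * (μ / (1 - μ / L))) * t) / (2 * μ) := by
        gcongr
        exact sq_norm_gradient_le_mul_exp_of_flow (hμ.trans hμL) hμL hsc hupper hx hH hode ht
    _ = _ := mul_div_right_comm _ _ _

end HessianFlow

/-- For `0 < μ < L` and a twice continuously differentiable, `μ`-strongly
convex and `L`-smooth `f` with minimizer `x*`, any twice differentiable solution of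
`ẋ(t) − (1/L)·∇²f(x(t))·ẋ(t) + ∇f(x(t)) = 0` satisfies
`f(x(t)) − f(x*) = O(e^{−(μ/(1−μ/L))·t})` as `t → ∞`. -/
theorem first_order_hessian_flow_rate {n : ℕ}
    (μ L : ℝ) (hμ : 0 < μ) (hμL : μ < L)
    (f : EuclideanSpace ℝ (Fin n) → ℝ)
    (xstar : EuclideanSpace ℝ (Fin n))
    (hf : ContDiff ℝ 2 f)
    (hmin : ∀ y, f xstar ≤ f y)
    (hsc : ∀ y z : EuclideanSpace ℝ (Fin n),
      f z ≥ f y + ⟪gradient f y, z - y⟫ + μ / 2 * ‖z - y‖ ^ 2)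
    (hsmooth : ∀ y z : EuclideanSpace ℝ (Fin n),
      ‖gradient f y - gradient f z‖ ≤ L * ‖y - z‖)
    (x v a H : ℝ → EuclideanSpace ℝ (Fin n))
    (hx : ∀ t : ℝ, 0 ≤ t → HasDerivAt x (v t) t)
    (hv : ∀ t : ℝ, 0 ≤ t → HasDerivAt v (a t) t)
    (hH : ∀ t : ℝ, 0 ≤ t → HasDerivAt (fun s => gradient f (x s)) (H t) t)
    (hode : ∀ t : ℝ, 0 ≤ t → v t - (1 / L) • H t + gradient f (x t) = 0) :
    ∃ T C : ℝ, 0 < T ∧ 0 < C ∧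
      ∀ t : ℝ, T ≤ t → f (x t) - f xstar ≤ C * Real.exp (-(μ / (1 - μ / L)) * t) := by
  have hrate : 0 < μ / (1 - μ / L) :=
    div_pos hμ (sub_pos.2 ((div_lt_one (hμ.trans hμL)).2 hμL))
  refine ⟨1, ‖gradient f (x 0)‖ ^ 2 / (2 * μ) + 1, one_pos, by positivity, fun t ht => ?_⟩
  have ht₀ : 0 ≤ t := zero_le_one.trans ht
  refine (first_order_hessian_flow_rate_general hμ hμL (hf.differentiable two_ne_zero) hsc hsmooth
    (fun s hs => (hx s hs).hasDerivWithinAt) (fun s hs => (hH s hs).hasDerivWithinAt) hode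
    xstar ht₀).trans ?_
  gcongr <;> linarith
end

section
/- Let 0 < μ < L, let f : ℝⁿ → ℝ be twice continuously differentiable, μ-strongly convex and L-smooth with global minimizer x*, write f* = f(x*), and let x : [0,∞) → ℝⁿ be a twice differentiable solution of ẋ(t) − (1/L)·∇²f(x(t))·ẋ(t) + ∇f(x(t)) = 0. Set k = μ/(1 − μ/L). Then the function E(t) = (k/2)·e^{kt}·‖x(t) − x*‖² − (k/L)·e^{kt}·( f* − f(x(t)) + ⟨∇f(x(t)), x(t) − x*⟩ ) + e^{kt}·( f(x(t)) − f* ) is non-increasing on [0,∞) and satisfies E(t) ≥ e^{kt}·( f(x(t)) − f* ) for all t ≥ 0. -/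
open scoped RealInnerProductSpace

/-!
Write `z` for `x*` and `D(z, y) = f z - f y - ⟪∇f y, z - y⟫` for the Bregman divergence. The energy
is `exp (k t) V(x t)` with `V y = k/2 ‖y - z‖² - k/L D(z, y) + (f y - f z)`, so it is non-increasing
as soon as `(V ∘ x)' ≤ -k V(x)`. Along a curve `d/dt D(z, x) = ⟪d/dt ∇f(x), x - z⟫`, hence the flow
equation collapses the derivative to `(V ∘ x)' = ⟪∇f(x), x'⟫ - k ⟪∇f(x), x - z⟫`. The first term is
nonpositive because `∇f` is `L`-Lipschitz. Since `⟪∇f(x), x - z⟫ = D(z, x) + f x - f z`, what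
remains is `k/2 ‖x - z‖² ≤ (1 + k/L) D(z, x)`, which is strong convexity because `k = (1 + k/L) μ`.
The lower bound on the energy is the descent lemma `D(z, y) ≤ L/2 ‖z - y‖²`.
-/

section Calculus

theorem norm_le_mul_norm_of_hasDerivAt {F G : Type*} [NormedAddCommGroup F] [NormedSpace ℝ F]
    [NormedAddCommGroup G] [NormedSpace ℝ G] {x : ℝ → F} {g : ℝ → G} {v : F} {w : G} {t L : ℝ}
    (hx : HasDerivAt x v t) (hg : HasDerivAt g w t)
    (hgx : ∀ᶠ s in nhds t, ‖g s - g t‖ ≤ L * ‖x s - x t‖) : ‖w‖ ≤ L * ‖v‖ := by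
  refine le_of_tendsto_of_tendsto (hasDerivAt_iff_tendsto_slope.1 hg).norm
    ((hasDerivAt_iff_tendsto_slope.1 hx).norm.const_mul L) ?_
  filter_upwards [nhdsWithin_le_nhds hgx] with s hs
  rw [slope_def_module, slope_def_module, norm_smul, norm_smul, mul_left_comm]
  gcongr

theorem antitoneOn_exp_mul_of_hasDerivAt_le {D : Set ℝ} (hD : Convex ℝ D) {V V' : ℝ → ℝ} {k : ℝ}
    (hVc : ContinuousOn V D) (hV : ∀ t ∈ interior D, HasDerivAt V (V' t) t)
    (hV' : ∀ t ∈ interior D, V' t ≤ -k * V t) :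
    AntitoneOn (fun t => Real.exp (k * t) * V t) D := by
  have hexp (t : ℝ) : HasDerivAt (fun s => Real.exp (k * s)) (Real.exp (k * t) * k) t := by
    simpa using ((hasDerivAt_id t).const_mul k).exp
  refine antitoneOn_of_hasDerivWithinAt_nonpos hD (by fun_prop)
    (fun t ht => ((hexp t).mul (hV t ht)).hasDerivWithinAt) fun t ht => ?_
  calc Real.exp (k * t) * k * V t + Real.exp (k * t) * V' t
      = Real.exp (k * t) * (V' t - -k * V t) := by ring
    _ ≤ 0 := mul_nonpos_of_nonneg_of_nonpos (Real.exp_pos _).le (sub_nonpos.2 (hV' t ht))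

end Calculus

section Bregman

variable {E : Type*} [NormedAddCommGroup E] [InnerProductSpace ℝ E] [CompleteSpace E]
  {f : E → ℝ} {x : ℝ → E} {v h : E} {t : ℝ}

theorem hasDerivAt_comp_inner_gradient (hf : DifferentiableAt ℝ f (x t))
    (hx : HasDerivAt x v t) : HasDerivAt (fun s => f (x s)) ⟪gradient f (x t), v⟫ t :=
  hf.hasGradientAt.hasFDerivAt.comp_hasDerivAt t hx

/-- The Bregman divergence `D_f(z, y)`: the gap at `z` between `f` and its linearization at `y`.
Strong convexity bounds it from below and smoothness from above. -/
noncomputable def bregmanDiv (f : E → ℝ) (z y : E) : ℝ :=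
  f z - f y - ⟪gradient f y, z - y⟫

theorem bregmanDiv_eq_add_inner (f : E → ℝ) (z y : E) :
    bregmanDiv f z y = f z - f y + ⟪gradient f y, y - z⟫ := by
  rw [bregmanDiv, ← neg_sub y z, inner_neg_right, sub_neg_eq_add]

theorem bregmanDiv_self (f : E → ℝ) (y : E) : bregmanDiv f y y = 0 := by
  simp [bregmanDiv]

theorem continuous_bregmanDiv_right (hf : Continuous f) (hgrad : Continuous (gradient f)) (z : E) :
    Continuous (bregmanDiv f z) := by
  unfold bregmanDiv
  fun_prop

theorem hasDerivAt_bregmanDiv_left (hf : DifferentiableAt ℝ f (x t)) (hx : HasDerivAt x v t)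
    (y : E) :
    HasDerivAt (fun s => bregmanDiv f (x s) y) ⟪gradient f (x t) - gradient f y, v⟫ t := by
  have hinner := (hasDerivAt_const t (gradient f y)).inner ℝ (hx.sub_const y)
  refine (((hasDerivAt_comp_inner_gradient hf hx).sub_const (f y)).sub hinner).congr_deriv ?_
  rw [inner_zero_left, add_zero, inner_sub_left]

theorem hasDerivAt_bregmanDiv_right (hf : DifferentiableAt ℝ f (x t)) (hx : HasDerivAt x v t)
    (hgrad : HasDerivAt (fun s => gradient f (x s)) h t) (z : E) :
    HasDerivAt (fun s => bregmanDiv f z (x s)) ⟪h, x t - z⟫ t := by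
  simp only [bregmanDiv_eq_add_inner]
  refine (((hasDerivAt_comp_inner_gradient hf hx).const_sub (f z)).add
    (hgrad.inner ℝ (hx.sub_const z))).congr_deriv ?_
  ring

theorem bregmanDiv_le_of_gradient_lipschitz {L : ℝ} {y : E} (hf : Differentiable ℝ f)
    (hgrad : ∀ z, ‖gradient f z - gradient f y‖ ≤ L * ‖z - y‖) (z : E) :
    bregmanDiv f z y ≤ L / 2 * ‖z - y‖ ^ 2 := by
  set w := z - y with hw
  have hline (s : ℝ) : HasDerivAt (fun s : ℝ => y + s • w) w s := by
    simpa using ((hasDerivAt_id s).smul_const w).const_add y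
  have hderiv (s : ℝ) :
      HasDerivAt (fun s => bregmanDiv f (y + s • w) y - L / 2 * ‖w‖ ^ 2 * s ^ 2)
        (⟪gradient f (y + s • w) - gradient f y, w⟫ - L * s * ‖w‖ ^ 2) s := by
    refine ((hasDerivAt_bregmanDiv_left (hf _) (hline s) y).sub
      ((hasDerivAt_pow 2 s).const_mul (L / 2 * ‖w‖ ^ 2))).congr_deriv ?_
    ring
  have hslope (s : ℝ) (hs : 0 ≤ s) :
      ⟪gradient f (y + s • w) - gradient f y, w⟫ ≤ L * s * ‖w‖ ^ 2 := calc
    _ ≤ ‖gradient f (y + s • w) - gradient f y‖ * ‖w‖ := real_inner_le_norm _ _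
    _ ≤ L * ‖y + s • w - y‖ * ‖w‖ := by gcongr; exact hgrad _
    _ = L * s * ‖w‖ ^ 2 := by rw [add_sub_cancel_left, norm_smul, Real.norm_of_nonneg hs]; ring
  have hanti := antitoneOn_of_hasDerivWithinAt_nonpos (convex_Ici (0 : ℝ))
    (fun s _ => (hderiv s).continuousAt.continuousWithinAt)
    (fun s _ => (hderiv s).hasDerivWithinAt)
    (fun s hs => sub_nonpos.2 (hslope s (interior_subset hs)))
  have hle := hanti Set.self_mem_Ici (Set.mem_Ici.2 zero_le_one) zero_le_one
  simpa [hw, bregmanDiv_self] using hle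

end Bregman

section HessianFlow

theorem div_one_sub_div_eq {K : Type*} [Field K] {μ L : K} (hμL : μ ≠ L) :
    μ / (1 - μ / L) = (1 + μ / (1 - μ / L) / L) * μ := by
  have hden : 1 - μ / L ≠ 0 := sub_ne_zero.2 fun h => hμL (eq_of_div_eq_one h.symm)
  linear_combination div_mul_cancel₀ μ hden

theorem inner_nonpos_of_sub_smul_add_eq_zero {E : Type*} [NormedAddCommGroup E]
    [InnerProductSpace ℝ E] {g v h : E} {L : ℝ} (hL : 0 < L) (hh : ‖h‖ ≤ L * ‖v‖)
    (hflow : v - (1 / L) • h + g = 0) : ⟪g, v⟫ ≤ 0 := by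
  have hg : g = (1 / L) • h - v := by rw [← sub_eq_zero, ← hflow]; abel
  have hhv : ⟪h, v⟫ ≤ L * ‖v‖ ^ 2 := calc
    ⟪h, v⟫ ≤ ‖h‖ * ‖v‖ := real_inner_le_norm h v
    _ ≤ L * ‖v‖ * ‖v‖ := by gcongr
    _ = L * ‖v‖ ^ 2 := by ring
  rw [hg, inner_sub_left, real_inner_smul_left, real_inner_self_eq_norm_sq, sub_nonpos, one_div,
    inv_mul_le_iff₀ hL]
  exact hhv

variable {E : Type*} [NormedAddCommGroup E] [InnerProductSpace ℝ E] [CompleteSpace E]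
  {f : E → ℝ} {L μ k : ℝ} {y z : E}

/-- The potential `V` for which `exp (k * t) * V (x t)` is the Lyapunov function of the flow
`ẋ - (1/L) ∇²f(x) ẋ + ∇f(x) = 0`, measured relative to a comparison point `z`. -/
noncomputable def hessianFlowPotential (f : E → ℝ) (L k : ℝ) (z y : E) : ℝ :=
  k / 2 * ‖y - z‖ ^ 2 - k / L * bregmanDiv f z y + (f y - f z)

theorem exp_mul_hessianFlowPotential (f : E → ℝ) (L k : ℝ) (z y : E) (t : ℝ) :
    Real.exp (k * t) * hessianFlowPotential f L k z y =
      k / 2 * Real.exp (k * t) * ‖y - z‖ ^ 2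
        - k / L * Real.exp (k * t) * (f z - f y + ⟪gradient f y, y - z⟫)
        + Real.exp (k * t) * (f y - f z) := by
  rw [hessianFlowPotential, bregmanDiv_eq_add_inner]
  ring

theorem continuous_hessianFlowPotential (hf : Continuous f) (hgrad : Continuous (gradient f)) :
    Continuous (hessianFlowPotential f L k z) := by
  have hbregman := continuous_bregmanDiv_right hf hgrad z
  unfold hessianFlowPotential
  fun_prop

theorem hasDerivAt_hessianFlowPotential {x : ℝ → E} {v h : E} {t : ℝ}
    (hf : DifferentiableAt ℝ f (x t)) (hx : HasDerivAt x v t)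
    (hgrad : HasDerivAt (fun s => gradient f (x s)) h t)
    (hflow : v - (1 / L) • h + gradient f (x t) = 0) :
    HasDerivAt (fun s => hessianFlowPotential f L k z (x s))
      (⟪gradient f (x t), v⟫ - k * ⟪gradient f (x t), x t - z⟫) t := by
  refine ((((hx.sub_const z).norm_sq.const_mul (k / 2)).sub
    ((hasDerivAt_bregmanDiv_right hf hx hgrad z).const_mul (k / L))).add
    ((hasDerivAt_comp_inner_gradient hf hx).sub_const (f z))).congr_deriv ?_
  have hinner : ⟪v, x t - z⟫ - 1 / L * ⟪h, x t - z⟫ + ⟪gradient f (x t), x t - z⟫ = 0 := by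
    rw [← real_inner_smul_left, ← inner_sub_left, ← inner_add_left, hflow, inner_zero_left]
  rw [real_inner_comm v (x t - z)]
  linear_combination k * hinner

theorem hessianFlowPotential_le_inner_gradient (hL : 0 < L) (hk : 0 ≤ k)
    (hkμ : k ≤ (1 + k / L) * μ) (hlower : μ / 2 * ‖z - y‖ ^ 2 ≤ bregmanDiv f z y) :
    hessianFlowPotential f L k z y ≤ ⟪gradient f y, y - z⟫ := by
  have hstrong : k / 2 * ‖y - z‖ ^ 2 ≤ (1 + k / L) * bregmanDiv f z y := calc
    k / 2 * ‖y - z‖ ^ 2 ≤ (1 + k / L) * μ / 2 * ‖z - y‖ ^ 2 := by rw [norm_sub_rev y z]; gcongr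
    _ = (1 + k / L) * (μ / 2 * ‖z - y‖ ^ 2) := by ring
    _ ≤ (1 + k / L) * bregmanDiv f z y := by gcongr
  have hinner := bregmanDiv_eq_add_inner f z y
  rw [hessianFlowPotential]
  linarith

theorem sub_le_hessianFlowPotential (hL : 0 < L) (hk : 0 ≤ k)
    (hupper : bregmanDiv f z y ≤ L / 2 * ‖z - y‖ ^ 2) :
    f y - f z ≤ hessianFlowPotential f L k z y := by
  have hscaled : k / L * bregmanDiv f z y ≤ k / 2 * ‖y - z‖ ^ 2 := calc
    k / L * bregmanDiv f z y ≤ k / L * (L / 2 * ‖z - y‖ ^ 2) := by gcongr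
    _ = k / 2 * ‖y - z‖ ^ 2 := by rw [norm_sub_rev z y]; field_simp
  rw [hessianFlowPotential]
  linarith

theorem first_order_hessian_flow_lyapunov_general (hL : 0 < L) (hk : 0 ≤ k)
    (hkμ : k ≤ (1 + k / L) * μ) (hf : Differentiable ℝ f)
    (hsc : ∀ y, f z ≥ f y + ⟪gradient f y, z - y⟫ + μ / 2 * ‖z - y‖ ^ 2)
    (hsmooth : ∀ y w, ‖gradient f y - gradient f w‖ ≤ L * ‖y - w‖)
    {D : Set ℝ} (hD : Convex ℝ D) {x v H : ℝ → E} (hxc : ContinuousOn x D)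
    (hx : ∀ t ∈ interior D, HasDerivAt x (v t) t)
    (hH : ∀ t ∈ interior D, HasDerivAt (fun s => gradient f (x s)) (H t) t)
    (hode : ∀ t ∈ interior D, v t - (1 / L) • H t + gradient f (x t) = 0) :
    AntitoneOn (fun t => Real.exp (k * t) * hessianFlowPotential f L k z (x t)) D ∧
      ∀ t, Real.exp (k * t) * hessianFlowPotential f L k z (x t) ≥
        Real.exp (k * t) * (f (x t) - f z) := by
  have hgrad : Continuous (gradient f) :=
    (LipschitzWith.of_dist_le' (by simpa only [dist_eq_norm] using hsmooth)).continuous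
  constructor
  · refine antitoneOn_exp_mul_of_hasDerivAt_le hD
      ((continuous_hessianFlowPotential hf.continuous hgrad).comp_continuousOn hxc)
      (fun t ht => hasDerivAt_hessianFlowPotential (hf _) (hx t ht) (hH t ht) (hode t ht))
      fun t ht => ?_
    have hdissip : ⟪gradient f (x t), v t⟫ ≤ 0 :=
      inner_nonpos_of_sub_smul_add_eq_zero hL
        (norm_le_mul_norm_of_hasDerivAt (hx t ht) (hH t ht) (.of_forall fun _ => hsmooth _ _))
        (hode t ht)
    have hpotential : hessianFlowPotential f L k z (x t) ≤ ⟪gradient f (x t), x t - z⟫ :=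
      hessianFlowPotential_le_inner_gradient hL hk hkμ
        (by rw [bregmanDiv]; linarith [hsc (x t)])
    linarith [mul_le_mul_of_nonneg_left hpotential hk]
  · intro t
    exact mul_le_mul_of_nonneg_left
      (sub_le_hessianFlowPotential hL hk
        (bregmanDiv_le_of_gradient_lipschitz hf (fun w => hsmooth w (x t)) z))
      (Real.exp_pos _).le

end HessianFlow

/-- Lyapunov function for the flow `ẋ − (1/L)∇²f(x)ẋ + ∇f(x) = 0`:
with `k = μ/(1 − μ/L)`, the function
`E(t) = (k/2)e^{kt}‖x(t) − x*‖² − (k/L)e^{kt}(f* − f(x(t)) + ⟨∇f(x(t)), x(t) − x*⟩)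
       + e^{kt}(f(x(t)) − f*)`
is non-increasing on `[0,∞)` and dominates `e^{kt}(f(x(t)) − f*)`. -/
theorem first_order_hessian_flow_lyapunov {n : ℕ}
    (μ L : ℝ) (hμ : 0 < μ) (hμL : μ < L)
    (f : EuclideanSpace ℝ (Fin n) → ℝ)
    (xstar : EuclideanSpace ℝ (Fin n))
    (hf : ContDiff ℝ 2 f)
    (hmin : ∀ y, f xstar ≤ f y)
    (hsc : ∀ y z : EuclideanSpace ℝ (Fin n),
      f z ≥ f y + ⟪gradient f y, z - y⟫ + μ / 2 * ‖z - y‖ ^ 2)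
    (hsmooth : ∀ y z : EuclideanSpace ℝ (Fin n),
      ‖gradient f y - gradient f z‖ ≤ L * ‖y - z‖)
    (x v a H : ℝ → EuclideanSpace ℝ (Fin n))
    (hx : ∀ t : ℝ, 0 ≤ t → HasDerivAt x (v t) t)
    (hv : ∀ t : ℝ, 0 ≤ t → HasDerivAt v (a t) t)
    (hH : ∀ t : ℝ, 0 ≤ t → HasDerivAt (fun s => gradient f (x s)) (H t) t)
    (hode : ∀ t : ℝ, 0 ≤ t → v t - (1 / L) • H t + gradient f (x t) = 0)
    (k : ℝ) (hk : k = μ / (1 - μ / L)) :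
    AntitoneOn (fun t : ℝ =>
        k / 2 * Real.exp (k * t) * ‖x t - xstar‖ ^ 2
          - k / L * Real.exp (k * t) *
              (f xstar - f (x t) + ⟪gradient f (x t), x t - xstar⟫)
          + Real.exp (k * t) * (f (x t) - f xstar)) (Set.Ici (0 : ℝ))
      ∧ ∀ t : ℝ, 0 ≤ t →
        k / 2 * Real.exp (k * t) * ‖x t - xstar‖ ^ 2
          - k / L * Real.exp (k * t) *
              (f xstar - f (x t) + ⟪gradient f (x t), x t - xstar⟫)
          + Real.exp (k * t) * (f (x t) - f xstar)
        ≥ Real.exp (k * t) * (f (x t) - f xstar) := by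
  have hL : 0 < L := hμ.trans hμL
  have hk₀ : 0 ≤ k := hk ▸ div_nonneg hμ.le (sub_nonneg.2 ((div_le_one hL).2 hμL.le))
  have hkμ : k = (1 + k / L) * μ := hk ▸ div_one_sub_div_eq hμL.ne
  obtain ⟨hanti, hge⟩ := first_order_hessian_flow_lyapunov_general hL hk₀ hkμ.le
    (hf.differentiable two_ne_zero) (fun y => hsc y xstar) hsmooth (convex_Ici 0)
    (fun t ht => (hx t ht).continuousAt.continuousWithinAt)
    (fun t ht => hx t (interior_subset ht)) (fun t ht => hH t (interior_subset ht))
    (fun t ht => hode t (interior_subset ht))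
  simp only [exp_mul_hessianFlowPotential] at hanti hge
  exact ⟨hanti, fun t _ => hge t⟩
end

section
/- Let μ > 0 and let f : ℝⁿ → ℝ be a continuously differentiable μ-strongly convex function with global minimizer x*. Let x : [0,∞) → ℝⁿ be a differentiable solution of the gradient flow ẋ(t) + ∇f(x(t)) = 0 for all t ≥ 0. Then f(x(t)) − f(x*) = O( e^{−2μt} ) as t → ∞. -/
open scoped RealInnerProductSpace

/-!
Completing the square in the quadratic lower bound of `f` at `y` gives the Polyak–Łojasiewicz
inequality `2 * μ * (f y - f x⋆) ≤ ‖∇f y‖ ^ 2`. Since `f` decreases along the flow at rate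
`‖∇f‖ ^ 2`, the gap `f (x t) - f x⋆` decreases at a rate of at least `2 * μ` times itself, and
Grönwall's inequality applies.
-/

open Set
open scoped Gradient

theorem le_mul_exp_of_hasDerivWithinAt_le {g g' : ℝ → ℝ} {K a : ℝ}
    (hg : ∀ t ∈ Ici a, HasDerivWithinAt g (g' t) (Ici a) t)
    (hle : ∀ t ∈ Ici a, g' t ≤ K * g t) {t : ℝ} (ht : t ∈ Ici a) :
    g t ≤ g a * Real.exp (K * (t - a)) := by
  have hcont : ContinuousOn g (Icc a t) := fun s hs =>
    ((hg s hs.1).mono Icc_subset_Ici_self).continuousWithinAt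
  have hbound := le_gronwallBound_of_liminf_deriv_right_le (ε := 0) hcont
    (fun s hs _ => ((hg s hs.1).mono (Ici_subset_Ici.2 hs.1)).liminf_right_slope_le)
    le_rfl (fun s hs => (hle s hs.1).trans_eq (add_zero _).symm) t (right_mem_Icc.2 ht)
  rwa [gronwallBound_ε0] at hbound

section InnerProductSpace

variable {E : Type*} [NormedAddCommGroup E] [InnerProductSpace ℝ E] {f : E → ℝ}

theorem polyak_lojasiewicz_of_strong_subgradient {μ : ℝ} (hμ : 0 ≤ μ) {g y z : E}
    (hg : f y + ⟪g, z - y⟫ + μ / 2 * ‖z - y‖ ^ 2 ≤ f z) :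
    2 * μ * (f y - f z) ≤ ‖g‖ ^ 2 := by
  have hsquare : ‖g + μ • (z - y)‖ ^ 2 =
      ‖g‖ ^ 2 + 2 * μ * (⟪g, z - y⟫ + μ / 2 * ‖z - y‖ ^ 2) := by
    rw [norm_add_sq_real, inner_smul_right, norm_smul, Real.norm_of_nonneg hμ]
    ring
  have hgap : f y - f z ≤ -(⟪g, z - y⟫ + μ / 2 * ‖z - y‖ ^ 2) := by linarith
  calc 2 * μ * (f y - f z)
      ≤ 2 * μ * -(⟪g, z - y⟫ + μ / 2 * ‖z - y‖ ^ 2) := by gcongr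
    _ = ‖g‖ ^ 2 - ‖g + μ • (z - y)‖ ^ 2 := by rw [hsquare]; ring
    _ ≤ ‖g‖ ^ 2 := sub_le_self _ (sq_nonneg _)

variable [CompleteSpace E]

theorem hasDerivWithinAt_comp_of_hasGradientAt {x : ℝ → E} {g v : E} {s : Set ℝ} {t : ℝ}
    (hf : HasGradientAt f g (x t)) (hx : HasDerivWithinAt x v s t) :
    HasDerivWithinAt (fun r => f (x r)) ⟪g, v⟫ s t := by
  have hcomp := hf.hasFDerivAt.comp_hasDerivWithinAt t hx
  rwa [InnerProductSpace.toDual_apply_apply] at hcomp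

theorem gradient_flow_rate_general {μ m : ℝ} {x : ℝ → E}
    (hf : ∀ t ∈ Ici (0 : ℝ), DifferentiableAt ℝ f (x t))
    (hx : ∀ t ∈ Ici (0 : ℝ), HasDerivWithinAt x (-∇ f (x t)) (Ici 0) t)
    (hpl : ∀ t ∈ Ici (0 : ℝ), 2 * μ * (f (x t) - m) ≤ ‖∇ f (x t)‖ ^ 2)
    {t : ℝ} (ht : t ∈ Ici 0) :
    f (x t) - m ≤ (f (x 0) - m) * Real.exp (-(2 * μ) * t) := by
  have hgap : ∀ s ∈ Ici (0 : ℝ),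
      HasDerivWithinAt (fun r => f (x r) - m) (-‖∇ f (x s)‖ ^ 2) (Ici 0) s := fun s hs => by
    simpa only [inner_neg_right, real_inner_self_eq_norm_sq] using
      (hasDerivWithinAt_comp_of_hasGradientAt (hf s hs).hasGradientAt (hx s hs)).sub_const m
  have hdecay : ∀ s ∈ Ici (0 : ℝ), -‖∇ f (x s)‖ ^ 2 ≤ -(2 * μ) * (f (x s) - m) :=
    fun s hs => by linarith [hpl s hs]
  simpa only [sub_zero] using le_mul_exp_of_hasDerivWithinAt_le hgap hdecay ht

end InnerProductSpace

/-- For `μ > 0` and a continuously differentiable `μ`-strongly convex `f`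
with minimizer `x*`, any differentiable solution of the gradient flow
`ẋ(t) + ∇f(x(t)) = 0` satisfies `f(x(t)) − f(x*) = O(e^{−2μt})` as `t → ∞`. -/
theorem gradient_flow_rate {n : ℕ}
    (μ : ℝ) (hμ : 0 < μ)
    (f : EuclideanSpace ℝ (Fin n) → ℝ)
    (xstar : EuclideanSpace ℝ (Fin n))
    (hf : ContDiff ℝ 1 f)
    (hmin : ∀ y, f xstar ≤ f y)
    (hsc : ∀ y z : EuclideanSpace ℝ (Fin n),
      f z ≥ f y + ⟪gradient f y, z - y⟫ + μ / 2 * ‖z - y‖ ^ 2)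
    (x v : ℝ → EuclideanSpace ℝ (Fin n))
    (hx : ∀ t : ℝ, 0 ≤ t → HasDerivAt x (v t) t)
    (hode : ∀ t : ℝ, 0 ≤ t → v t + gradient f (x t) = 0) :
    ∃ T C : ℝ, 0 < T ∧ 0 < C ∧
      ∀ t : ℝ, T ≤ t → f (x t) - f xstar ≤ C * Real.exp (-(2 * μ) * t) := by
  refine ⟨1, f (x 0) - f xstar + 1, one_pos, by linarith [hmin (x 0)], fun t ht =>
    (gradient_flow_rate_general (fun _ _ => hf.differentiable one_ne_zero _)
      (fun s hs => eq_neg_of_add_eq_zero_left (hode s hs) ▸ (hx s hs).hasDerivWithinAt)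
      (fun s _ => polyak_lojasiewicz_of_strong_subgradient hμ.le (hsc (x s) xstar))
      (zero_le_one.trans ht)).trans ?_⟩
  gcongr
  exact le_add_of_nonneg_right zero_le_one
end

section
/- Let μ > 0, let f : ℝⁿ → ℝ be a continuously differentiable μ-strongly convex function with global minimizer x*, write f* = f(x*), and let x : [0,∞) → ℝⁿ be a twice differentiable solution of ẍ(t) + 2√μ·ẋ(t) + ∇f(x(t)) = 0. Then the function E(t) = (1/2)·e^{√μ·t}·‖ẋ(t) + √μ·(x(t) − x*)‖² + e^{√μ·t}·( f(x(t)) − f* ) is non-increasing on [0,∞). -/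
open scoped RealInnerProductSpace

/-!
Write `s = √μ`, `d = x - x*`, and let `φ = ½‖ẋ + s d‖² + f(x) - f(x*)` be the Lyapunov function
without its exponential weight. Substituting `ẍ = -2s ẋ - ∇f(x)`, the cross terms `⟪ẋ, d⟫` and
`⟪∇f(x), ẋ⟫` cancel in `φ̇ + (s/2)‖ẋ + s d‖²`, which leaves
`-s (⟪∇f(x), d⟫ - (μ/2)‖d‖²) - (s/2)‖ẋ‖²`. Strong convexity between `x` and `x*` bounds the bracket
below by `f(x) - f(x*)`, so `φ̇ ≤ -s φ`, and `e^{st} φ` is non-increasing.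
-/

theorem antitoneOn_exp_mul_of_hasDerivWithinAt_le {D : Set ℝ} (hD : Convex ℝ D) {φ φ' : ℝ → ℝ}
    {c : ℝ} (hφ : ContinuousOn φ D)
    (hφ' : ∀ t ∈ interior D, HasDerivWithinAt φ (φ' t) (interior D) t)
    (hle : ∀ t ∈ interior D, φ' t ≤ -c * φ t) :
    AntitoneOn (fun t ↦ Real.exp (c * t) * φ t) D := by
  have hexp (t : ℝ) : HasDerivAt (fun t ↦ Real.exp (c * t)) (Real.exp (c * t) * c) t :=
    (hasDerivAt_const_mul c).exp
  refine antitoneOn_of_hasDerivWithinAt_nonpos hD (by fun_prop)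
    (fun t ht ↦ (hexp t).hasDerivWithinAt.mul (hφ' t ht)) fun t ht ↦ ?_
  calc Real.exp (c * t) * c * φ t + Real.exp (c * t) * φ' t
      = Real.exp (c * t) * (φ' t - -c * φ t) := by ring
    _ ≤ 0 := mul_nonpos_of_nonneg_of_nonpos (Real.exp_pos _).le (sub_nonpos.mpr (hle t ht))

section NagFlow

variable {E : Type*} [NormedAddCommGroup E] [InnerProductSpace ℝ E]

/-- The Lyapunov function of the NAG flow `ẍ + 2s·ẋ + ∇f(x) = 0` relative to the reference point
`z`, without its weight `e^{st}`; the velocity `v` is passed separately from the trajectory `x`. -/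
noncomputable def nagEnergy (s : ℝ) (f : E → ℝ) (z : E) (x v : ℝ → E) (t : ℝ) : ℝ :=
  1 / 2 * ‖v t + s • (x t - z)‖ ^ 2 + (f (x t) - f z)

theorem hasDerivWithinAt_nagEnergy [CompleteSpace E] {s : ℝ} {f : E → ℝ} {g z a : E}
    {x v : ℝ → E} {D : Set ℝ} {t : ℝ} (hf : HasGradientAt f g (x t))
    (hx : HasDerivWithinAt x (v t) D t) (hv : HasDerivWithinAt v a D t) :
    HasDerivWithinAt (nagEnergy s f z x v)
      (⟪v t + s • (x t - z), a + s • v t⟫ + ⟪g, v t⟫) D t := by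
  have hw : HasDerivWithinAt (fun t ↦ v t + s • (x t - z)) (a + s • v t) D t :=
    hv.add ((hx.sub_const z).const_smul s)
  have hfx : HasDerivWithinAt (fun t ↦ f (x t)) ⟪g, v t⟫ D t :=
    hf.hasFDerivAt.comp_hasDerivWithinAt t hx
  refine ((hw.norm_sq.const_mul (1 / 2)).add (hfx.sub_const (f z))).congr_deriv ?_
  ring

theorem inner_add_inner_eq_of_nag_ode {s : ℝ} {a v g : E} (d : E)
    (hode : a + (2 * s) • v + g = 0) :
    ⟪v + s • d, a + s • v⟫ + ⟪g, v⟫ =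
      -s * (1 / 2 * ‖v + s • d‖ ^ 2 + (⟪g, d⟫ - s ^ 2 / 2 * ‖d‖ ^ 2)) - s / 2 * ‖v‖ ^ 2 := by
  have ha : a = -((2 * s) • v + g) := eq_neg_of_add_eq_zero_left (by rwa [← add_assoc])
  have hacc : a + s • v = -(s • v + g) := by rw [ha]; module
  rw [hacc]
  simp only [← real_inner_self_eq_norm_sq, inner_add_left, inner_add_right, inner_neg_right,
    real_inner_smul_left, real_inner_smul_right, real_inner_comm v d, real_inner_comm v g,
    real_inner_comm d g]
  ring

theorem inner_add_inner_le_neg_mul_nagEnergy {s : ℝ} (hs : 0 ≤ s) {f : E → ℝ} {g z a : E}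
    {x v : ℝ → E} {t : ℝ} (hode : a + (2 * s) • v t + g = 0)
    (hsc : f (x t) + ⟪g, z - x t⟫ + s ^ 2 / 2 * ‖z - x t‖ ^ 2 ≤ f z) :
    ⟪v t + s • (x t - z), a + s • v t⟫ + ⟪g, v t⟫ ≤ -s * nagEnergy s f z x v t := by
  have hgap : f (x t) - f z ≤ ⟪g, x t - z⟫ - s ^ 2 / 2 * ‖x t - z‖ ^ 2 := by
    rw [← neg_sub (x t) z, inner_neg_right, norm_neg] at hsc
    linarith
  have hkin : 0 ≤ s / 2 * ‖v t‖ ^ 2 := by positivity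
  rw [inner_add_inner_eq_of_nag_ode (x t - z) hode, nagEnergy]
  linarith [mul_le_mul_of_nonneg_left hgap hs]

theorem sc_nag_flow_lyapunov_general [CompleteSpace E] {μ : ℝ} (hμ : 0 ≤ μ) {f : E → ℝ} {z : E}
    {x v a : ℝ → E} {D : Set ℝ} (hD : Convex ℝ D)
    (hf : ∀ t ∈ D, DifferentiableAt ℝ f (x t))
    (hsc : ∀ t ∈ D,
      f (x t) + ⟪gradient f (x t), z - x t⟫ + μ / 2 * ‖z - x t‖ ^ 2 ≤ f z)
    (hx : ∀ t ∈ D, HasDerivWithinAt x (v t) D t)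
    (hv : ∀ t ∈ D, HasDerivWithinAt v (a t) D t)
    (hode : ∀ t ∈ D, a t + (2 * √μ) • v t + gradient f (x t) = 0) :
    AntitoneOn (fun t ↦ 1 / 2 * Real.exp (√μ * t) * ‖v t + √μ • (x t - z)‖ ^ 2
      + Real.exp (√μ * t) * (f (x t) - f z)) D := by
  have hderiv (t : ℝ) (ht : t ∈ D) :=
    hasDerivWithinAt_nagEnergy (s := √μ) (z := z) (hf t ht).hasGradientAt (hx t ht) (hv t ht)
  have hanti : AntitoneOn (fun t ↦ Real.exp (√μ * t) * nagEnergy √μ f z x v t) D :=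
    antitoneOn_exp_mul_of_hasDerivWithinAt_le hD (fun t ht ↦ (hderiv t ht).continuousWithinAt)
      (fun t ht ↦ (hderiv t (interior_subset ht)).mono interior_subset)
      fun t ht ↦ inner_add_inner_le_neg_mul_nagEnergy (Real.sqrt_nonneg μ)
        (hode t (interior_subset ht))
        ((Real.sq_sqrt hμ).symm ▸ hsc t (interior_subset ht))
  refine hanti.congr fun t _ ↦ ?_
  simp only [nagEnergy]
  ring

end NagFlow

/-- Lyapunov function for the SC-NAG flow `ẍ + 2√μ·ẋ + ∇f(x) = 0`:
`E(t) = (1/2)e^{√μ·t}‖ẋ(t) + √μ(x(t) − x*)‖² + e^{√μ·t}(f(x(t)) − f*)` is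
non-increasing on `[0,∞)`. -/
theorem sc_nag_flow_lyapunov {n : ℕ}
    (μ : ℝ) (hμ : 0 < μ)
    (f : EuclideanSpace ℝ (Fin n) → ℝ)
    (xstar : EuclideanSpace ℝ (Fin n))
    (hf : ContDiff ℝ 1 f)
    (hmin : ∀ y, f xstar ≤ f y)
    (hsc : ∀ y z : EuclideanSpace ℝ (Fin n),
      f z ≥ f y + ⟪gradient f y, z - y⟫ + μ / 2 * ‖z - y‖ ^ 2)
    (x v a : ℝ → EuclideanSpace ℝ (Fin n))
    (hx : ∀ t : ℝ, 0 ≤ t → HasDerivAt x (v t) t)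
    (hv : ∀ t : ℝ, 0 ≤ t → HasDerivAt v (a t) t)
    (hode : ∀ t : ℝ, 0 ≤ t →
      a t + (2 * Real.sqrt μ) • v t + gradient f (x t) = 0) :
    AntitoneOn (fun t : ℝ =>
        1 / 2 * Real.exp (Real.sqrt μ * t) *
            ‖v t + Real.sqrt μ • (x t - xstar)‖ ^ 2
          + Real.exp (Real.sqrt μ * t) * (f (x t) - f xstar))
      (Set.Ici (0 : ℝ)) :=
  sc_nag_flow_lyapunov_general hμ.le (convex_Ici 0)
    (fun t _ ↦ hf.differentiable one_ne_zero (x t)) (fun t _ ↦ hsc (x t) xstar)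
    (fun t ht ↦ (hx t ht).hasDerivWithinAt) (fun t ht ↦ (hv t ht).hasDerivWithinAt) hode
end

section
/- Let μ > 0 and let f : ℝⁿ → ℝ be a twice continuously differentiable μ-strongly convex function with global minimizer x*. Let x : [0,∞) → ℝⁿ be a twice differentiable solution of ẍ(t) + √μ·ẋ(t) + (1/√μ)·∇²f(x(t))·ẋ(t) + ∇f(x(t)) = 0 for all t ≥ 0. Then f(x(t)) − f(x*) = O( e^{−√μ·t} ) as t → ∞. -/
open scoped RealInnerProductSpace

/-!
With `s = √μ`, the equation says exactly that `w = v + s⁻¹ ∇f(x)` satisfies `w' = -s w`. Hence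
`E = f(x) - f* + ‖w‖² / 2` has derivative `⟪∇f(x), v⟫ - s ‖w‖²`. Expanding `s ‖w‖² / 2` cancels the
inner product and leaves `E' + s E = s (f(x) - f*) - s ‖v‖² / 2 - ‖∇f(x)‖² / (2 s)`, which is
nonpositive by the Polyak–Łojasiewicz inequality `2 μ (f - f*) ≤ ‖∇f‖²`, a consequence of strong
convexity. Grönwall's inequality then gives `E(t) ≤ E(0) exp (-s t)`.
-/

lemma le_mul_exp_of_hasDerivWithinAt_le_s8 {u u' : ℝ → ℝ} {k t₀ : ℝ}
    (hu : ∀ t, t₀ ≤ t → HasDerivWithinAt u (u' t) (Set.Ici t₀) t)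
    (hu' : ∀ t, t₀ ≤ t → u' t ≤ k * u t) {t : ℝ} (ht : t₀ ≤ t) :
    u t ≤ u t₀ * Real.exp (k * (t - t₀)) := by
  have hcont : ContinuousOn u (Set.Icc t₀ t) := fun r hr =>
    (hu r hr.1).continuousWithinAt.mono Set.Icc_subset_Ici_self
  have hright : ∀ r ∈ Set.Ico t₀ t, HasDerivWithinAt u (u' r) (Set.Ici r) r := fun r hr =>
    (hu r hr.1).mono (Set.Ici_subset_Ici.2 hr.1)
  have hbound := le_gronwallBound_of_liminf_deriv_right_le (ε := 0) hcont
    (fun r hr _ => (hright r hr).liminf_right_slope_le) le_rfl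
    (fun r hr => by simpa only [add_zero] using hu' r hr.1) t (Set.right_mem_Icc.2 ht)
  rwa [gronwallBound_ε0] at hbound

lemma hasDerivWithinAt_add_one_div_smul {F : Type*} [NormedAddCommGroup F] [NormedSpace ℝ F]
    {v G : ℝ → F} {a H : F} {s t : ℝ} {S : Set ℝ} (hs : s ≠ 0)
    (hv : HasDerivWithinAt v a S t) (hG : HasDerivWithinAt G H S t)
    (hode : a + s • v t + (1 / s) • H + G t = 0) :
    HasDerivWithinAt (fun r => v r + (1 / s) • G r) (-(s • (v t + (1 / s) • G t))) S t := by
  refine (hv.add (hG.const_smul (1 / s))).congr_deriv ?_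
  rw [eq_neg_iff_add_eq_zero, smul_add, smul_smul, mul_one_div_cancel hs, one_smul, ← hode]
  abel

section InnerProductSpace

variable {E : Type*} [NormedAddCommGroup E] [InnerProductSpace ℝ E]

-- For `b = f y`, `g = ∇f y` and `c = f*`, this is the Polyak–Łojasiewicz inequality.
lemma two_mul_mul_sub_le_norm_sq_of_add_inner_add_le {μ b c : ℝ}
    (hμ : 0 ≤ μ) {g d : E} (h : b + ⟪g, d⟫ + μ / 2 * ‖d‖ ^ 2 ≤ c) :
    2 * μ * (b - c) ≤ ‖g‖ ^ 2 := by
  have hsq : ‖g + μ • d‖ ^ 2 = ‖g‖ ^ 2 + 2 * μ * (⟪g, d⟫ + μ / 2 * ‖d‖ ^ 2) := by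
    rw [norm_add_sq_real, real_inner_smul_right, norm_smul, mul_pow, Real.norm_eq_abs, sq_abs]
    ring
  calc 2 * μ * (b - c) ≤ 2 * μ * -(⟪g, d⟫ + μ / 2 * ‖d‖ ^ 2) := by gcongr; linarith
    _ = ‖g‖ ^ 2 - ‖g + μ • d‖ ^ 2 := by rw [hsq]; ring
    _ ≤ ‖g‖ ^ 2 := sub_le_self _ (sq_nonneg _)

lemma inner_sub_mul_norm_sq_le {s δ : ℝ} (hs : 0 < s) {g v : E} (h : 2 * s ^ 2 * δ ≤ ‖g‖ ^ 2) :
    ⟪g, v⟫ - s * ‖v + (1 / s) • g‖ ^ 2 ≤ -s * (δ + 1 / 2 * ‖v + (1 / s) • g‖ ^ 2) := by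
  have hexpand : s / 2 * ‖v + (1 / s) • g‖ ^ 2 =
      s / 2 * ‖v‖ ^ 2 + ⟪g, v⟫ + ‖g‖ ^ 2 / (2 * s) := by
    rw [norm_add_sq_real, real_inner_smul_right, norm_smul, mul_pow, Real.norm_eq_abs, sq_abs,
      real_inner_comm]
    field_simp
  have hδ : s * δ ≤ ‖g‖ ^ 2 / (2 * s) := by
    rw [le_div_iff₀ (by positivity)]
    linarith
  have hv : 0 ≤ s / 2 * ‖v‖ ^ 2 := by positivity
  linarith

variable [CompleteSpace E] {f : E → ℝ} {c : ℝ} {x v : ℝ → E}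

/-- The Lyapunov function of the flow `ẍ + s ẋ + s⁻¹ ∇²f(x) ẋ + ∇f(x) = 0`, as a function of the
position `p` and the velocity `q`; the level `c` plays the role of the minimum of `f`. -/
noncomputable def hessianFlowEnergy (f : E → ℝ) (c s : ℝ) (p q : E) : ℝ :=
  f p - c + 1 / 2 * ‖q + (1 / s) • gradient f p‖ ^ 2

lemma sub_le_hessianFlowEnergy (f : E → ℝ) (c s : ℝ) (p q : E) :
    f p - c ≤ hessianFlowEnergy f c s p q :=
  le_add_of_nonneg_right (by positivity)

lemma hasDerivWithinAt_hessianFlowEnergy {s t : ℝ} {a H : E} {S : Set ℝ} (hs : s ≠ 0)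
    (hf : DifferentiableAt ℝ f (x t))
    (hx : HasDerivWithinAt x (v t) S t) (hv : HasDerivWithinAt v a S t)
    (hH : HasDerivWithinAt (fun r => gradient f (x r)) H S t)
    (hode : a + s • v t + (1 / s) • H + gradient f (x t) = 0) :
    HasDerivWithinAt (fun r => hessianFlowEnergy f c s (x r) (v r))
      (⟪gradient f (x t), v t⟫ - s * ‖v t + (1 / s) • gradient f (x t)‖ ^ 2) S t := by
  have hfx : HasDerivWithinAt (fun r => f (x r)) ⟪gradient f (x t), v t⟫ S t :=
    (hf.hasFDerivAt.comp_hasDerivWithinAt t hx).congr_deriv inner_gradient_left.symm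
  have hw := hasDerivWithinAt_add_one_div_smul hs hv hH hode
  refine ((hfx.sub_const c).add (hw.norm_sq.const_mul (1 / 2))).congr_deriv ?_
  rw [inner_neg_right, real_inner_smul_right, real_inner_self_eq_norm_sq]
  ring

theorem second_order_hessian_flow_rate_general {μ : ℝ} (hμ : 0 < μ) (hf : Differentiable ℝ f)
    (hPL : ∀ y, 2 * μ * (f y - c) ≤ ‖gradient f y‖ ^ 2) {a H : ℝ → E}
    (hx : ∀ t, 0 ≤ t → HasDerivWithinAt x (v t) (Set.Ici 0) t)
    (hv : ∀ t, 0 ≤ t → HasDerivWithinAt v (a t) (Set.Ici 0) t)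
    (hH : ∀ t, 0 ≤ t → HasDerivWithinAt (fun r => gradient f (x r)) (H t) (Set.Ici 0) t)
    (hode : ∀ t, 0 ≤ t → a t + √μ • v t + (1 / √μ) • H t + gradient f (x t) = 0) :
    ∀ t, 0 ≤ t → f (x t) - c ≤ hessianFlowEnergy f c √μ (x 0) (v 0) * Real.exp (-√μ * t) := by
  intro t ht
  have hs : 0 < √μ := Real.sqrt_pos.2 hμ
  have henergy := fun r hr => hasDerivWithinAt_hessianFlowEnergy (c := c) hs.ne' (hf (x r))
    (hx r hr) (hv r hr) (hH r hr) (hode r hr)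
  have hdecay : ∀ r, 0 ≤ r →
      ⟪gradient f (x r), v r⟫ - √μ * ‖v r + (1 / √μ) • gradient f (x r)‖ ^ 2 ≤
        -√μ * hessianFlowEnergy f c √μ (x r) (v r) := fun r _ =>
    inner_sub_mul_norm_sq_le hs (by simpa only [Real.sq_sqrt hμ.le] using hPL (x r))
  calc f (x t) - c ≤ hessianFlowEnergy f c √μ (x t) (v t) := sub_le_hessianFlowEnergy ..
    _ ≤ hessianFlowEnergy f c √μ (x 0) (v 0) * Real.exp (-√μ * t) := by
      simpa only [sub_zero] using le_mul_exp_of_hasDerivWithinAt_le_s8 henergy hdecay ht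

end InnerProductSpace

/-- For `μ > 0` and a twice continuously differentiable `μ`-strongly convex
`f` with minimizer `x*`, any twice differentiable solution of
`ẍ(t) + √μ·ẋ(t) + (1/√μ)·∇²f(x(t))·ẋ(t) + ∇f(x(t)) = 0` satisfies
`f(x(t)) − f(x*) = O(e^{−√μ·t})`. -/
theorem second_order_hessian_flow_rate {n : ℕ}
    (μ : ℝ) (hμ : 0 < μ)
    (f : EuclideanSpace ℝ (Fin n) → ℝ)
    (xstar : EuclideanSpace ℝ (Fin n))
    (hf : ContDiff ℝ 2 f)
    (hmin : ∀ y, f xstar ≤ f y)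
    (hsc : ∀ y z : EuclideanSpace ℝ (Fin n),
      f z ≥ f y + ⟪gradient f y, z - y⟫ + μ / 2 * ‖z - y‖ ^ 2)
    (x v a H : ℝ → EuclideanSpace ℝ (Fin n))
    (hx : ∀ t : ℝ, 0 ≤ t → HasDerivAt x (v t) t)
    (hv : ∀ t : ℝ, 0 ≤ t → HasDerivAt v (a t) t)
    (hH : ∀ t : ℝ, 0 ≤ t → HasDerivAt (fun s => gradient f (x s)) (H t) t)
    (hode : ∀ t : ℝ, 0 ≤ t →
      a t + Real.sqrt μ • v t + (1 / Real.sqrt μ) • H t + gradient f (x t) = 0) :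
    ∃ T C : ℝ, 0 < T ∧ 0 < C ∧
      ∀ t : ℝ, T ≤ t → f (x t) - f xstar ≤ C * Real.exp (-Real.sqrt μ * t) := by
  have hrate := second_order_hessian_flow_rate_general hμ
    (hf.differentiable two_ne_zero)
    (fun y => two_mul_mul_sub_le_norm_sq_of_add_inner_add_le hμ.le (hsc y xstar))
    (fun t ht => (hx t ht).hasDerivWithinAt) (fun t ht => (hv t ht).hasDerivWithinAt)
    (fun t ht => (hH t ht).hasDerivWithinAt) hode
  exact ⟨1, max 1 _, one_pos, lt_max_of_lt_left one_pos, fun t ht =>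
    (hrate t (zero_le_one.trans ht)).trans
      (mul_le_mul_of_nonneg_right (le_max_right _ _) (Real.exp_nonneg _))⟩
end

section
/- Let f : ℝⁿ → ℝ be a continuously differentiable convex function with global minimizer x*, write f* = f(x*), and let x : (0,∞) → ℝⁿ be a twice differentiable solution of ẍ(t) + (3/t)·ẋ(t) + ∇f(x(t)) = 0 for all t > 0. Then the function E(t) = 2‖x(t) − x*‖² + 2t·⟨x(t) − x*, ẋ(t)⟩ + (t²/2)·‖ẋ(t)‖² + t²·( f(x(t)) − f* ) is non-increasing on (0,∞), and E(t) ≥ t²·( f(x(t)) − f* ) for all t > 0. -/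
open scoped RealInnerProductSpace

/-!
Completing the square gives `E(t) = 2‖m(t)‖² + t²(f(x(t)) − f*)` with
`m(t) = x(t) − x* + (t/2)ẋ(t)`, and the friction coefficient `3/t` is exactly the one for which the
flow turns into `ṁ(t) = −(t/2)∇f(x(t))`. The terms in `⟨∇f(x), ẋ⟩` then cancel in
`Ė(t) = 2t(f(x) − f* − ⟨x − x*, ∇f(x)⟩)`, which the gradient inequality between `x(t)` and `x*`
makes nonpositive.
-/

section NagFlow

variable {E : Type*} [NormedAddCommGroup E]

theorem hasDerivAt_sub_add_half_smul_of_nag_flow [NormedSpace ℝ E] {x v : ℝ → E} {a g p : E} {t : ℝ}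
    (ht : t ≠ 0) (hx : HasDerivAt x (v t) t) (hv : HasDerivAt v a t)
    (hode : a + (3 / t) • v t + g = 0) :
    HasDerivAt (fun s => x s - p + (s / 2) • v s) (-(t / 2) • g) t := by
  have hhalf : HasDerivAt (fun s : ℝ => s / 2) (1 / 2) t := (hasDerivAt_id t).div_const 2
  refine ((hx.sub_const p).add (hhalf.smul hv)).congr_deriv ?_
  rw [← neg_eq_of_add_eq_zero_right hode]
  match_scalars
  · field_simp
    norm_num
  · ring

variable [InnerProductSpace ℝ E]

/-- The Lyapunov function of the flow `ẍ + (3/t)ẋ + ∇f(x) = 0` relative to an anchor point `p`,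
along a curve `x` with velocity `v`; it serves to bound `f (x t) - f p`. The velocity is a separate
argument, not tied to `x` by the definition. -/
noncomputable def nagLyapunov (f : E → ℝ) (p : E) (x v : ℝ → E) (t : ℝ) : ℝ :=
  2 * ‖x t - p‖ ^ 2 + 2 * t * ⟪x t - p, v t⟫ + t ^ 2 / 2 * ‖v t‖ ^ 2 + t ^ 2 * (f (x t) - f p)

theorem nagLyapunov_eq_two_mul_norm_sq_add (f : E → ℝ) (p : E) (x v : ℝ → E) (t : ℝ) :
    nagLyapunov f p x v t =
      2 * ‖x t - p + (t / 2) • v t‖ ^ 2 + t ^ 2 * (f (x t) - f p) := by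
  rw [nagLyapunov, norm_add_sq_real, real_inner_smul_right, norm_smul, mul_pow, Real.norm_eq_abs,
    sq_abs]
  ring

theorem sq_mul_sub_le_nagLyapunov (f : E → ℝ) (p : E) (x v : ℝ → E) (t : ℝ) :
    t ^ 2 * (f (x t) - f p) ≤ nagLyapunov f p x v t := by
  rw [nagLyapunov_eq_two_mul_norm_sq_add]
  exact le_add_of_nonneg_left (by positivity)

variable [CompleteSpace E]

theorem hasDerivAt_nagLyapunov {f : E → ℝ} {x v : ℝ → E} {a g p : E} {t : ℝ} (ht : t ≠ 0)
    (hf : HasGradientAt f g (x t)) (hx : HasDerivAt x (v t) t) (hv : HasDerivAt v a t)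
    (hode : a + (3 / t) • v t + g = 0) :
    HasDerivAt (nagLyapunov f p x v) (2 * t * (f (x t) - f p - ⟪x t - p, g⟫)) t := by
  have hm := hasDerivAt_sub_add_half_smul_of_nag_flow (p := p) ht hx hv hode
  have hfx : HasDerivAt (fun s => f (x s)) ⟪g, v t⟫ t :=
    hf.hasFDerivAt.comp_hasDerivAt t hx
  rw [funext (nagLyapunov_eq_two_mul_norm_sq_add f p x v)]
  refine ((hm.norm_sq.const_mul 2).add
    ((hasDerivAt_pow 2 t).mul (hfx.sub_const (f p)))).congr_deriv ?_
  rw [inner_add_left, real_inner_smul_left, real_inner_smul_right, real_inner_smul_right,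
    real_inner_comm g (v t)]
  push_cast
  ring

theorem nag_flow_convex_lyapunov_general {f : E → ℝ} {p : E} (hf : Differentiable ℝ f)
    (hstar : ∀ y, f y + ⟪gradient f y, p - y⟫ ≤ f p) {x v a : ℝ → E}
    (hx : ∀ t, 0 < t → HasDerivAt x (v t) t) (hv : ∀ t, 0 < t → HasDerivAt v (a t) t)
    (hode : ∀ t, 0 < t → a t + (3 / t) • v t + gradient f (x t) = 0) :
    AntitoneOn (nagLyapunov f p x v) (Set.Ioi 0) ∧
      ∀ t, 0 < t → t ^ 2 * (f (x t) - f p) ≤ nagLyapunov f p x v t := by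
  have hderiv (t : ℝ) (ht : 0 < t) := hasDerivAt_nagLyapunov (p := p) ht.ne'
    (hf (x t)).hasGradientAt (hx t ht) (hv t ht) (hode t ht)
  have hgap (y : E) : f y - f p - ⟪y - p, gradient f y⟫ ≤ 0 := by
    have h := hstar y
    rw [← neg_sub y p, inner_neg_right, real_inner_comm] at h
    linarith
  refine ⟨antitoneOn_of_hasDerivWithinAt_nonpos (convex_Ioi 0)
    (fun t ht => (hderiv t ht).continuousAt.continuousWithinAt)
    (fun t ht => (hderiv t (interior_subset ht)).hasDerivWithinAt) fun t ht => ?_,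
    fun t _ => sq_mul_sub_le_nagLyapunov f p x v t⟩
  have ht : 0 < t := interior_subset ht
  exact mul_nonpos_of_nonneg_of_nonpos (by positivity) (hgap (x t))

end NagFlow

/-- Lyapunov function for the NAG flow `ẍ + (3/t)ẋ + ∇f(x) = 0`:
`E(t) = 2‖x(t) − x*‖² + 2t⟨x(t) − x*, ẋ(t)⟩ + (t²/2)‖ẋ(t)‖² + t²(f(x(t)) − f*)` is
non-increasing on `(0,∞)` and dominates `t²(f(x(t)) − f*)`. -/
theorem nag_flow_convex_lyapunov {n : ℕ}
    (f : EuclideanSpace ℝ (Fin n) → ℝ)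
    (xstar : EuclideanSpace ℝ (Fin n))
    (hf : ContDiff ℝ 1 f)
    (hmin : ∀ y, f xstar ≤ f y)
    (hconv : ∀ y z : EuclideanSpace ℝ (Fin n),
      f z ≥ f y + ⟪gradient f y, z - y⟫)
    (x v a : ℝ → EuclideanSpace ℝ (Fin n))
    (hx : ∀ t : ℝ, 0 < t → HasDerivAt x (v t) t)
    (hv : ∀ t : ℝ, 0 < t → HasDerivAt v (a t) t)
    (hode : ∀ t : ℝ, 0 < t → a t + (3 / t) • v t + gradient f (x t) = 0) :
    AntitoneOn (fun t : ℝ =>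
        2 * ‖x t - xstar‖ ^ 2 + 2 * t * ⟪x t - xstar, v t⟫
          + t ^ 2 / 2 * ‖v t‖ ^ 2 + t ^ 2 * (f (x t) - f xstar))
        (Set.Ioi (0 : ℝ))
      ∧ ∀ t : ℝ, 0 < t →
        2 * ‖x t - xstar‖ ^ 2 + 2 * t * ⟪x t - xstar, v t⟫
          + t ^ 2 / 2 * ‖v t‖ ^ 2 + t ^ 2 * (f (x t) - f xstar)
        ≥ t ^ 2 * (f (x t) - f xstar) :=
  nag_flow_convex_lyapunov_general (hf.differentiable one_ne_zero) (fun y => hconv y xstar) hx hv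
    hode
end

section
/- Let μ > 0, let l > 0, set T = 2(l² + 1)/(l³·√μ), and let f : ℝⁿ → ℝ be a continuously differentiable μ-strongly convex function with global minimizer x*; write f* = f(x*). Let x : (0,T] → ℝⁿ be a twice differentiable solution of ẍ(t) + (4(l² + 1)/(l²·t))·ẋ(t) + ∇f(x(t)) = 0 for all t ∈ (0,T]. Then the function E(t) = l²·μ·(T/t − 1)·e^{l√μ·t}·‖x(t) − x*‖² + (1/2)·e^{l√μ·t}·‖ẋ(t) + l√μ·(x(t) − x*)‖² + e^{l√μ·t}·( f(x(t)) − f* ) is non-increasing on (0,T]. -/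
open scoped RealInnerProductSpace

/-!
For the damped flow `ẍ + γ(t)ẋ + ∇f(x) = 0`, weight the displacement term of the energy by
`c = sγ/2 - s²`: this is the choice that cancels the cross term `⟪x - p, ẋ⟫` in `Ė`. What remains
is a multiple of `‖ẋ‖²`, nonpositive when `3s/2 ≤ γ`, and, after strong convexity bounds the
function gap, a multiple of `‖x - p‖²`, nonpositive when `γ' + sγ ≤ s² + μ`. For `γ = α/t`,
completing the square in `1/t` gives `γ' + sγ ≤ αs²/4`. The restart time is `T = α/(2s)`, where
`c` vanishes, and `α = 4(l² + 1)/l²`, `s = l√μ` is a case of equality `αs²/4 = s² + μ`.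
-/

section DampedFlow

variable {E : Type*} [NormedAddCommGroup E] [InnerProductSpace ℝ E]

/-- The exponentially weighted energy of a curve `x` with velocity `v` relative to the point `p`:
the Lyapunov function of the damped flow, with rate `s` and a free weight `c` on the squared
displacement. The velocity is a separate argument, not `deriv x`. -/
noncomputable def flowEnergy (c : ℝ → ℝ) (s : ℝ) (f : E → ℝ) (p : E) (x v : ℝ → E) (t : ℝ) : ℝ :=
  c t * Real.exp (s * t) * ‖x t - p‖ ^ 2
    + 1 / 2 * Real.exp (s * t) * ‖v t + s • (x t - p)‖ ^ 2
    + Real.exp (s * t) * (f (x t) - f p)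

variable [CompleteSpace E]

/-- Quasi-strong convexity: the strong convexity inequality with modulus `μ`, required only
between an arbitrary point and the fixed point `p`, with the gradient taken at the former. -/
def QuasiStronglyConvexAt (μ : ℝ) (f : E → ℝ) (p : E) : Prop :=
  ∀ y, f y + ⟪gradient f y, p - y⟫ + μ / 2 * ‖p - y‖ ^ 2 ≤ f p

variable {f : E → ℝ} {p : E} {x v : ℝ → E} {S : Set ℝ} {s μ : ℝ}

theorem QuasiStronglyConvexAt.sub_le (h : QuasiStronglyConvexAt μ f p) (y : E) :
    f y - f p ≤ ⟪gradient f y, y - p⟫ - μ / 2 * ‖y - p‖ ^ 2 := by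
  have hy := h y
  rw [← neg_sub y p, inner_neg_right, norm_neg] at hy
  linarith

theorem hasDerivWithinAt_flowEnergy {c : ℝ → ℝ} {c' γ t : ℝ}
    (hc : HasDerivWithinAt c c' S t) (hf : DifferentiableAt ℝ f (x t))
    (hx : HasDerivWithinAt x (v t) S t)
    (hv : HasDerivWithinAt v (-(γ • v t) - gradient f (x t)) S t) :
    HasDerivWithinAt (flowEnergy c s f p x v)
      (Real.exp (s * t) *
        ((c' + s * c t + s ^ 3 / 2) * ‖x t - p‖ ^ 2
          + (2 * c t + 2 * s ^ 2 - s * γ) * ⟪x t - p, v t⟫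
          + (3 * s / 2 - γ) * ‖v t‖ ^ 2
          + s * (f (x t) - f p - ⟪gradient f (x t), x t - p⟫))) S t := by
  have hexp : HasDerivWithinAt (fun t ↦ Real.exp (s * t)) (Real.exp (s * t) * s) S t := by
    simpa using ((hasDerivAt_id t).const_mul s).exp.hasDerivWithinAt
  have hdisp : HasDerivWithinAt (fun t ↦ x t - p) (v t) S t := hx.sub_const p
  have hmix : HasDerivWithinAt (fun t ↦ v t + s • (x t - p))
      (-(γ • v t) - gradient f (x t) + s • v t) S t := hv.add (hdisp.const_smul s)
  have hgap : HasDerivWithinAt (fun t ↦ f (x t) - f p) ⟪gradient f (x t), v t⟫ S t :=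
    (hf.hasGradientAt.hasFDerivAt.comp_hasDerivWithinAt t hx).sub_const (f p)
  refine ((((hc.mul hexp).mul hdisp.norm_sq).add
    ((hexp.const_mul (1 / 2)).mul hmix.norm_sq)).add (hexp.mul hgap)).congr_deriv ?_
  simp only [Pi.mul_apply]
  generalize x t - p = w
  simp only [← real_inner_self_eq_norm_sq, inner_add_left, inner_add_right, inner_sub_right,
    inner_neg_right, inner_smul_right, real_inner_smul_left, real_inner_comm w (v t),
    real_inner_comm (gradient f (x t))]
  ring

theorem antitoneOn_flowEnergy {γ γ' : ℝ → ℝ} (hS : Convex ℝ S) (hs : 0 ≤ s)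
    (hf : Differentiable ℝ f) (hsc : QuasiStronglyConvexAt μ f p)
    (hγ : ∀ t ∈ S, HasDerivWithinAt γ (γ' t) S t)
    (hγ_lower : ∀ t ∈ S, 3 * s / 2 ≤ γ t) (hγ_upper : ∀ t ∈ S, γ' t + s * γ t ≤ s ^ 2 + μ)
    (hx : ∀ t ∈ S, HasDerivWithinAt x (v t) S t)
    (hv : ∀ t ∈ S, HasDerivWithinAt v (-(γ t • v t) - gradient f (x t)) S t) :
    AntitoneOn (flowEnergy (fun t ↦ s * γ t / 2 - s ^ 2) s f p x v) S := by
  have hderiv := fun t ht ↦ hasDerivWithinAt_flowEnergy (p := p) (s := s)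
    ((((hγ t ht).const_mul s).div_const 2).sub_const (s ^ 2)) (hf (x t)) (hx t ht) (hv t ht)
  refine antitoneOn_of_hasDerivWithinAt_nonpos hS (fun t ht ↦ (hderiv t ht).continuousWithinAt)
    (fun t ht ↦ (hderiv t (interior_subset ht)).mono interior_subset) fun t ht ↦ ?_
  replace ht := interior_subset ht
  refine mul_nonpos_of_nonneg_of_nonpos (Real.exp_pos _).le ?_
  have hgap := mul_le_mul_of_nonneg_left (hsc.sub_le (x t)) hs
  have hvel : (3 * s / 2 - γ t) * ‖v t‖ ^ 2 ≤ 0 :=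
    mul_nonpos_of_nonpos_of_nonneg (sub_nonpos.2 (hγ_lower t ht)) (sq_nonneg _)
  have hdisp : s / 2 * (γ' t + s * γ t - (s ^ 2 + μ)) * ‖x t - p‖ ^ 2 ≤ 0 :=
    mul_nonpos_of_nonpos_of_nonneg
      (mul_nonpos_of_nonneg_of_nonpos (by positivity) (sub_nonpos.2 (hγ_upper t ht)))
      (sq_nonneg _)
  linarith

theorem antitoneOn_flowEnergy_of_inv_damping {α : ℝ} (hS : Convex ℝ S) (hs : 0 ≤ s)
    (hf : Differentiable ℝ f) (hsc : QuasiStronglyConvexAt μ f p)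
    (hα : α * s ^ 2 / 4 ≤ s ^ 2 + μ) (hpos : ∀ t ∈ S, 0 < t) (hle : ∀ t ∈ S, 3 * s / 2 * t ≤ α)
    (hx : ∀ t ∈ S, HasDerivWithinAt x (v t) S t)
    (hv : ∀ t ∈ S, HasDerivWithinAt v (-((α / t) • v t) - gradient f (x t)) S t) :
    AntitoneOn (flowEnergy (fun t ↦ s * (α / t) / 2 - s ^ 2) s f p x v) S := by
  refine antitoneOn_flowEnergy (γ := fun t ↦ α / t) (γ' := fun t ↦ -α / t ^ 2) hS hs hf hsc
    (fun t ht ↦ ?_) (fun t ht ↦ (le_div_iff₀ (hpos t ht)).2 (hle t ht)) (fun t ht ↦ ?_) hx hv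
  · simpa [div_eq_mul_inv] using ((hasDerivAt_inv (hpos t ht).ne').const_mul α).hasDerivWithinAt
  · have ht_pos := hpos t ht
    have hα_nonneg : 0 ≤ α := le_trans (by positivity) (hle t ht)
    calc -α / t ^ 2 + s * (α / t) = α * s ^ 2 / 4 - α * (1 / t - s / 2) ^ 2 := by ring
      _ ≤ α * s ^ 2 / 4 := sub_le_self _ (by positivity)
      _ ≤ s ^ 2 + μ := hα

theorem nag_flow_restart_lyapunov_general {l T : ℝ} {a : ℝ → E} (hμ : 0 < μ) (hl : 0 < l)
    (hT : T = 2 * (l ^ 2 + 1) / (l ^ 3 * √μ))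
    (hf : Differentiable ℝ f) (hsc : QuasiStronglyConvexAt μ f p)
    (hS : Convex ℝ S) (hST : S ⊆ Set.Ioc 0 (4 / 3 * T))
    (hx : ∀ t ∈ S, HasDerivWithinAt x (v t) S t) (hv : ∀ t ∈ S, HasDerivWithinAt v (a t) S t)
    (hode : ∀ t ∈ S, a t + (4 * (l ^ 2 + 1) / (l ^ 2 * t)) • v t + gradient f (x t) = 0) :
    AntitoneOn (flowEnergy (fun t ↦ l ^ 2 * μ * (T / t - 1)) (l * √μ) f p x v) S := by
  set s := l * √μ with hs_def
  set α := 4 * (l ^ 2 + 1) / l ^ 2 with hα_def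
  have hs : 0 < s := by positivity
  have hs_sq : s ^ 2 = l ^ 2 * μ := by rw [hs_def, mul_pow, Real.sq_sqrt hμ.le]
  have hα : α * s ^ 2 / 4 = s ^ 2 + μ := by rw [hs_sq, hα_def]; field_simp
  have hαT : α = 2 * s * T := by rw [hα_def, hs_def, hT]; field_simp; ring
  have hweight : (fun t ↦ l ^ 2 * μ * (T / t - 1)) = fun t ↦ s * (α / t) / 2 - s ^ 2 := by
    funext t
    rw [← hs_sq, hαT]
    ring
  rw [hweight]
  refine antitoneOn_flowEnergy_of_inv_damping hS hs.le hf hsc hα.le (fun t ht ↦ (hST ht).1)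
    (fun t ht ↦ ?_) hx fun t ht ↦ (hv t ht).congr_deriv ?_
  · calc 3 * s / 2 * t ≤ 3 * s / 2 * (4 / 3 * T) := by gcongr; exact (hST ht).2
      _ = α := by rw [hαT]; ring
  · have hode_t := hode t ht
    rw [← div_div, add_assoc] at hode_t
    rw [eq_neg_of_add_eq_zero_left hode_t, neg_add']

end DampedFlow

/-- For `μ, l > 0` and `T = 2(l² + 1)/(l³√μ)`, with `f` continuously
differentiable and `μ`-strongly convex with minimizer `x*`, for a twice differentiable
solution of `ẍ(t) + (4(l² + 1)/(l²t))·ẋ(t) + ∇f(x(t)) = 0` on `(0,T]`, the function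
`E(t) = l²μ(T/t − 1)e^{l√μt}‖x(t) − x*‖² + (1/2)e^{l√μt}‖ẋ(t) + l√μ(x(t) − x*)‖²
        + e^{l√μt}(f(x(t)) − f*)`
is non-increasing on `(0,T]`. -/
theorem nag_flow_restart_lyapunov {n : ℕ}
    (μ l T : ℝ) (hμ : 0 < μ) (hl : 0 < l)
    (hT : T = 2 * (l ^ 2 + 1) / (l ^ 3 * Real.sqrt μ))
    (f : EuclideanSpace ℝ (Fin n) → ℝ)
    (xstar : EuclideanSpace ℝ (Fin n))
    (hf : ContDiff ℝ 1 f)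
    (hmin : ∀ y, f xstar ≤ f y)
    (hsc : ∀ y z : EuclideanSpace ℝ (Fin n),
      f z ≥ f y + ⟪gradient f y, z - y⟫ + μ / 2 * ‖z - y‖ ^ 2)
    (x v a : ℝ → EuclideanSpace ℝ (Fin n))
    (hx : ∀ t ∈ Set.Ioc (0 : ℝ) T, HasDerivWithinAt x (v t) (Set.Ioc (0 : ℝ) T) t)
    (hv : ∀ t ∈ Set.Ioc (0 : ℝ) T, HasDerivWithinAt v (a t) (Set.Ioc (0 : ℝ) T) t)
    (hode : ∀ t ∈ Set.Ioc (0 : ℝ) T,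
      a t + (4 * (l ^ 2 + 1) / (l ^ 2 * t)) • v t + gradient f (x t) = 0) :
    AntitoneOn (fun t : ℝ =>
        l ^ 2 * μ * (T / t - 1) * Real.exp (l * Real.sqrt μ * t) * ‖x t - xstar‖ ^ 2
          + 1 / 2 * Real.exp (l * Real.sqrt μ * t) *
              ‖v t + (l * Real.sqrt μ) • (x t - xstar)‖ ^ 2
          + Real.exp (l * Real.sqrt μ * t) * (f (x t) - f xstar))
      (Set.Ioc (0 : ℝ) T) :=
  nag_flow_restart_lyapunov_general hμ hl hT (hf.differentiable one_ne_zero)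
    (fun y ↦ hsc y xstar) (convex_Ioc 0 T) (fun t ht ↦ ⟨ht.1, by linarith [ht.1, ht.2]⟩) hx hv hode
end
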